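/- arXiv:2002.06613 — 2 statements merged into one kernel-verified Lean document; each statement's English description precedes it below -/
import Mathlib

section
/- Let A ∈ ℝ^{n×n}, B ∈ ℝ^{n×m} with (A, B) controllable, let μ_0 ∈ ℝ^n be fixed, and suppose ℓ ≥ (1/2)mn² + (1/2)mn + m + 2. Let ν_0, …, ν_{ℓ-1} be random vectors in ℝ^m whose entries are independent, each distributed as a Gaussian with strictly positive variance. Define μ_{t+1} = A μ_t + B ν_t for 0 ≤ t ≤ ℓ-1 and let Z = [[μ_{ℓ-1}, …, μ_0]; [ν_{ℓ-1}, …, ν_0]] ∈ ℝ^{(n+m)×ℓ}. Then with probability one Z has full row rank n+m, and consequently Z Z^T is invertible with probability one. -/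
open Matrix MeasureTheory ProbabilityTheory

/-- The first-moment trajectory `μ_{t+1} = A μ_t + B ν_t` started at `μ₀`. -/
noncomputable def traj {n m : ℕ} (A : Matrix (Fin n) (Fin n) ℝ) (B : Matrix (Fin n) (Fin m) ℝ)
    (μ0 : Fin n → ℝ) (ν : ℕ → Fin m → ℝ) : ℕ → Fin n → ℝ
  | 0 => μ0
  | t + 1 => A *ᵥ traj A B μ0 ν t + B *ᵥ ν t

/-- The controllability matrix `[B, AB, …, A^{n-1} B] ∈ ℝ^{n × nm}`. -/
noncomputable def ctrbMat {n m : ℕ} (A : Matrix (Fin n) (Fin n) ℝ)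
    (B : Matrix (Fin n) (Fin m) ℝ) : Matrix (Fin n) (Fin n × Fin m) ℝ :=
  Matrix.of fun i kj => (A ^ (kj.1 : ℕ) * B) i kj.2

/-- `(A, B)` is controllable if the controllability matrix has rank `n`. -/
def Controllable {n m : ℕ} (A : Matrix (Fin n) (Fin n) ℝ)
    (B : Matrix (Fin n) (Fin m) ℝ) : Prop :=
  (ctrbMat A B).rank = n

/-- `Z = [[μ_{ℓ-1}, …, μ_0]; [ν_{ℓ-1}, …, ν_0]] ∈ ℝ^{(n+m) × ℓ}`: its column `c`
(time index `ℓ - 1 - c = c.rev`) stacks `μ_{ℓ-1-c}` over `ν_{ℓ-1-c}`. -/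
noncomputable def Zmat {n m ℓ : ℕ} (A : Matrix (Fin n) (Fin n) ℝ)
    (B : Matrix (Fin n) (Fin m) ℝ) (μ0 : Fin n → ℝ) (ν : Fin ℓ → Fin m → ℝ) :
    Matrix (Fin n ⊕ Fin m) (Fin ℓ) ℝ :=
  Matrix.of fun r c =>
    Sum.elim
      (fun i => traj A B μ0 (fun t => if h : t < ℓ then ν ⟨t, h⟩ else 0) c.rev i)
      (fun j => ν c.rev j) r

/-!
The determinant of `Z Zᵀ` is a polynomial in the `ℓ m` entries of the inputs. Over independent
inputs without atoms a polynomial is almost surely nonzero as soon as it is not the zero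
polynomial, so it is enough to find one deterministic input sequence for which `Z` has rank
`n + m`.

Such a sequence is built greedily. Let `W` be the span of the columns `(μ_s, ν_s)`, `s < t`. If no
choice of `ν_t` lets `(μ_t, ν_t)` leave `W`, then `W` contains every `(0, u)`, hence every
`(μ_s, 0)` with `s ≤ t`, so `W` is stable under `(x, u) ↦ (A x + B u, 0)`. The `x` with
`(x, 0) ∈ W` then form an `A`-invariant subspace containing the range of `B`, which is everything
by controllability, and `W` was already the whole space. So each step adds a dimension until
`n + m` is reached.
-/

section FullRowRank

variable {ι κ 𝕜 : Type*} [Fintype ι] [DecidableEq ι] [Field 𝕜]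

theorem isUnit_iff_rank_eq_card {M : Matrix ι ι 𝕜} : IsUnit M ↔ M.rank = Fintype.card ι := by
  rw [← linearIndependent_rows_iff_isUnit, linearIndependent_iff_card_eq_finrank_span,
    Set.finrank, ← rank_eq_finrank_span_row, eq_comm]

theorem isUnit_mul_transpose_iff_rank_eq_card [LinearOrder 𝕜] [IsStrictOrderedRing 𝕜] [Fintype κ]
    {M : Matrix ι κ 𝕜} : IsUnit (M * Mᵀ) ↔ M.rank = Fintype.card ι := by
  rw [isUnit_iff_rank_eq_card, rank_self_mul_transpose]

end FullRowRank

section PolynomialFunctions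

/-- The algebra of polynomial functions of the variables `x i`, `i : σ`, as the range of polynomial
evaluation: the multivariate analogue of `polynomialFunctions`, without a topology. -/
noncomputable def mvPolynomialFunctions (σ R : Type*) [CommSemiring R] :
    Subalgebra R ((σ → R) → R) :=
  (MvPolynomial.aeval fun i x => x i : MvPolynomial σ R →ₐ[R] (σ → R) → R).range

theorem mem_mvPolynomialFunctions {σ R : Type*} [CommSemiring R] {f : (σ → R) → R} :
    f ∈ mvPolynomialFunctions σ R ↔
      ∃ p : MvPolynomial σ R, ∀ x, MvPolynomial.eval x p = f x := by
  have aeval_apply (p : MvPolynomial σ R) (x : σ → R) :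
      MvPolynomial.aeval (fun i (y : σ → R) => y i) p x = MvPolynomial.eval x p := by
    simpa using DFunLike.congr_fun
      (MvPolynomial.comp_aeval (fun i (y : σ → R) => y i) (Pi.evalAlgHom R _ x)) p
  simp only [mvPolynomialFunctions, AlgHom.mem_range, funext_iff, aeval_apply]

theorem apply_mem_mvPolynomialFunctions {σ R : Type*} [CommSemiring R] (i : σ) :
    (fun x => x i) ∈ mvPolynomialFunctions σ R :=
  mem_mvPolynomialFunctions.2 ⟨MvPolynomial.X i, fun _ => MvPolynomial.eval_X i⟩

theorem dotProduct_mem_of_forall_apply_mem {X R ι : Type*} [CommSemiring R] [Fintype ι]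
    {S : Subalgebra R (X → R)} {f g : X → ι → R} (hf : ∀ i, (fun x => f x i) ∈ S)
    (hg : ∀ i, (fun x => g x i) ∈ S) : (fun x => f x ⬝ᵥ g x) ∈ S := by
  have hsum : (fun x => f x ⬝ᵥ g x) = ∑ i, (fun x => f x i) * fun x => g x i := by
    ext x
    simp only [dotProduct, Finset.sum_apply, Pi.mul_apply]
  exact hsum ▸ sum_mem fun i _ => mul_mem (hf i) (hg i)

theorem det_mem_of_forall_apply_mem {X R ι : Type*} [CommRing R] [Fintype ι] [DecidableEq ι]
    {S : Subalgebra R (X → R)} {M : X → Matrix ι ι R}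
    (hM : ∀ i j, (fun x => M x i j) ∈ S) : (fun x => (M x).det) ∈ S := by
  have hdet : (fun x => (M x).det) = (of fun i j x => M x i j).det := by
    ext x
    simp only [det_apply, of_apply, Finset.sum_apply, Pi.smul_apply, Finset.prod_apply]
  rw [hdet, det_apply]
  exact sum_mem fun τ _ => zsmul_mem (prod_mem fun i _ => hM _ i) _

end PolynomialFunctions

section PolynomialNonvanishing

theorem ae_polynomial_eval_ne_zero {R : Type*} [CommRing R] [IsDomain R] [MeasurableSpace R]
    (μ : Measure R) [NullSingletonClass μ] {p : Polynomial R} (hp : p ≠ 0) :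
    ∀ᵐ x ∂μ, p.eval x ≠ 0 := by
  filter_upwards [(Polynomial.finite_setOfPred_isRoot hp).countable.ae_notMem μ] with x hx
  exact hx

variable {σ R : Type*} [CommRing R] [MeasurableSpace R] [MeasurableAdd₂ R] [MeasurableMul₂ R]

theorem measurable_mvPolynomial_eval (p : MvPolynomial σ R) :
    Measurable fun x : σ → R => MvPolynomial.eval x p := by
  simp only [MvPolynomial.eval_eq]
  fun_prop

variable [IsDomain R] [MeasurableSingletonClass R]

theorem ae_mvPolynomial_eval_ne_zero_fin {k : ℕ} (μ : Fin k → Measure R) [∀ i, SigmaFinite (μ i)]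
    [∀ i, NullSingletonClass (μ i)] {p : MvPolynomial (Fin k) R} (hp : p ≠ 0) :
    ∀ᵐ x ∂Measure.pi μ, MvPolynomial.eval x p ≠ 0 := by
  induction k with
  | zero =>
    rw [MvPolynomial.eq_C_of_isEmpty p, Ne, MvPolynomial.C_eq_zero] at hp
    rw [MvPolynomial.eq_C_of_isEmpty p]
    exact Filter.Eventually.of_forall fun x => by simpa using hp
  | succ k ih =>
    set q : Polynomial (MvPolynomial (Fin k) R) := MvPolynomial.finSuccEquiv R k p
    have hq : q ≠ 0 := (map_ne_zero_iff _ (AlgEquiv.injective _)).2 hp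
    obtain ⟨d, hd⟩ : ∃ d, q.coeff d ≠ 0 := by
      simpa [Polynomial.ext_iff] using hq
    have slice_ne_zero : ∀ᵐ y ∂Measure.pi fun j => μ (Fin.succ j),
        ∀ᵐ x₀ ∂μ 0, MvPolynomial.eval (Fin.cons x₀ y : Fin (k + 1) → R) p ≠ 0 := by
      filter_upwards [ih (fun j => μ (Fin.succ j)) hd] with y hy
      have hqy : q.map (MvPolynomial.eval y) ≠ 0 := fun h =>
        hy (by simpa using congrArg (Polynomial.coeff · d) h)
      simpa only [MvPolynomial.eval_eq_eval_mv_eval'] using ae_polynomial_eval_ne_zero (μ 0) hqy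
    have hcons : Measurable fun z : R × (Fin k → R) => (Fin.cons z.1 z.2 : Fin (k + 1) → R) :=
      measurable_pi_lambda _ (Fin.cases measurable_fst fun j =>
        (measurable_pi_apply j).comp measurable_snd)
    have hmeas : MeasurableSet {z : R × (Fin k → R) |
        MvPolynomial.eval (Fin.cons z.1 z.2 : Fin (k + 1) → R) p ≠ 0} :=
      (measurable_mvPolynomial_eval p).comp hcons (measurableSet_singleton 0).compl
    have hprod := (Measure.ae_prod_iff_ae_ae hmeas).2 ((Measure.ae_ae_comm hmeas).2 slice_ne_zero)
    filter_upwards [(measurePreserving_piFinSuccAbove μ 0).quasiMeasurePreserving.ae hprod]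
      with x hx
    rwa [← Fin.cons_self_tail x]

theorem ae_mvPolynomial_eval_ne_zero [Fintype σ] (μ : σ → Measure R) [∀ i, SigmaFinite (μ i)]
    [∀ i, NullSingletonClass (μ i)] {p : MvPolynomial σ R} (hp : p ≠ 0) :
    ∀ᵐ x ∂Measure.pi μ, MvPolynomial.eval x p ≠ 0 := by
  let e := (Fintype.equivFin σ).symm
  have hmp := (measurePreserving_piCongrLeft μ e).symm
  have hrename : MvPolynomial.rename e.symm p ≠ 0 :=
    (map_ne_zero_iff _ (MvPolynomial.rename_injective _ e.symm.injective)).2 hp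
  filter_upwards [hmp.quasiMeasurePreserving.ae
    (ae_mvPolynomial_eval_ne_zero_fin (fun i => μ (e i)) hrename)] with x hx
  rw [MvPolynomial.eval_rename] at hx
  convert hx using 3
  ext i
  simp [MeasurableEquiv.piCongrLeft, Equiv.piCongrLeft, Equiv.piCongrLeft']

theorem ae_mvPolynomial_eval_ne_zero_of_iIndepFun [Finite σ] {Ω : Type*} [MeasurableSpace Ω]
    {P : Measure Ω} {X : σ → Ω → R} (hX : ∀ i, AEMeasurable (X i) P) (hindep : iIndepFun X P)
    (hlaw : ∀ i, NullSingletonClass (P.map (X i))) {p : MvPolynomial σ R} (hp : p ≠ 0) :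
    ∀ᵐ ω ∂P, MvPolynomial.eval (fun i => X i ω) p ≠ 0 := by
  have := Fintype.ofFinite σ
  have := hindep.isProbabilityMeasure
  have hae : ∀ᵐ x ∂P.map (fun ω i => X i ω), MvPolynomial.eval x p ≠ 0 := by
    rw [iIndepFun.map_fun_eq_pi_map hX hindep]
    exact ae_mvPolynomial_eval_ne_zero _ hp
  exact ae_of_ae_map (aemeasurable_pi_lambda _ hX) hae

end PolynomialNonvanishing

section Control

variable {n m : ℕ} {A : Matrix (Fin n) (Fin n) ℝ} {B : Matrix (Fin n) (Fin m) ℝ}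

theorem Controllable.le_mul (h : Controllable A B) : n ≤ n * m := by
  simpa [h.symm.le.antisymm h.le] using (ctrbMat A B).rank_le_card_width

theorem Controllable.eq_top_of_invariant (h : Controllable A B) {V : Submodule ℝ (Fin n → ℝ)}
    (hA : ∀ x ∈ V, A *ᵥ x ∈ V) (hB : ∀ u, B *ᵥ u ∈ V) : V = ⊤ := by
  have pow_mem (k : ℕ) (u : Fin m → ℝ) : A ^ k *ᵥ (B *ᵥ u) ∈ V := by
    induction k with
    | zero => simpa using hB u
    | succ k ih => simpa [pow_succ', Matrix.mul_assoc] using hA _ ih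
  have hspan : Submodule.span ℝ (Set.range (ctrbMat A B).col) = ⊤ :=
    Submodule.eq_top_of_finrank_eq <| by
      rw [← rank_eq_finrank_span_cols, Module.finrank_fin_fun]
      exact h
  rw [← top_le_iff, ← hspan, Submodule.span_le]
  rintro _ ⟨⟨k, j⟩, rfl⟩
  have hcol : (ctrbMat A B).col (k, j) = A ^ (k : ℕ) *ᵥ (B *ᵥ Pi.single j 1) := by
    rw [mulVec_mulVec, mulVec_single_one]
    rfl
  rw [hcol]
  exact pow_mem k _

theorem Controllable.eq_top_of_step_mem (h : Controllable A B)
    {W : Submodule ℝ (Fin n ⊕ Fin m → ℝ)} (hinput : ∀ u, Sum.elim (0 : Fin n → ℝ) u ∈ W)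
    (hstep : ∀ w ∈ W, Sum.elim (fromCols A B *ᵥ w) (0 : Fin m → ℝ) ∈ W) : W = ⊤ := by
  have hstate (x : Fin n → ℝ) : Sum.elim x (0 : Fin m → ℝ) ∈ W := by
    let V : Submodule ℝ (Fin n → ℝ) :=
      W.comap (LinearEquiv.sumArrowLequivProdArrow (Fin n) (Fin m) ℝ ℝ).symm.toLinearMap
        |>.comap (LinearMap.inl ℝ _ _)
    have hV : V = ⊤ := h.eq_top_of_invariant
      (fun x hx => by
        have : Sum.elim x (0 : Fin m → ℝ) ∈ W := hx
        have := hstep _ this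
        rwa [fromCols_mulVec_sumElim, mulVec_zero, add_zero] at this)
      (fun u => by
        have := hstep _ (hinput u)
        rwa [fromCols_mulVec_sumElim, mulVec_zero, zero_add] at this)
    exact Submodule.eq_top_iff'.1 hV x
  refine Submodule.eq_top_iff'.2 fun w => ?_
  have hw : w = Sum.elim (w ∘ Sum.inl) 0 + Sum.elim (0 : Fin n → ℝ) (w ∘ Sum.inr) := by
    rw [← Sum.elim_add_add, add_zero, zero_add, Sum.elim_comp_inl_inr]
  rw [hw]
  exact add_mem (hstate _) (hinput _)

variable (A B) (μ0 : Fin n → ℝ)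

/-- The column `(μ_t, ν_t)` of `Z`, the state stacked over the input at time `t`. -/
noncomputable def stateInput (ν : ℕ → Fin m → ℝ) (t : ℕ) : Fin n ⊕ Fin m → ℝ :=
  Sum.elim (traj A B μ0 ν t) (ν t)

/-- The span of the columns `(μ_s, ν_s)` with `s < t`. -/
noncomputable def stateInputSpan (ν : ℕ → Fin m → ℝ) (t : ℕ) :
    Submodule ℝ (Fin n ⊕ Fin m → ℝ) :=
  Submodule.span ℝ (stateInput A B μ0 ν '' Set.Iio t)

variable {A B μ0} {ν ν' : ℕ → Fin m → ℝ} {s t : ℕ}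

theorem traj_congr (h : ∀ s < t, ν s = ν' s) : traj A B μ0 ν t = traj A B μ0 ν' t := by
  induction t with
  | zero => rfl
  | succ t ih => rw [traj, traj, ih fun s hs => h s (by omega), h t (by omega)]

theorem stateInput_congr (h : ∀ s ≤ t, ν s = ν' s) :
    stateInput A B μ0 ν t = stateInput A B μ0 ν' t := by
  rw [stateInput, stateInput, traj_congr fun s hs => h s hs.le, h t le_rfl]

theorem stateInputSpan_congr (h : ∀ s < t, ν s = ν' s) :
    stateInputSpan A B μ0 ν t = stateInputSpan A B μ0 ν' t :=
  congrArg (Submodule.span ℝ) <| Set.image_congr fun _ hs =>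
    stateInput_congr fun r hr => h r (hr.trans_lt hs)

theorem stateInput_mem_stateInputSpan (hst : s < t) :
    stateInput A B μ0 ν s ∈ stateInputSpan A B μ0 ν t :=
  Submodule.subset_span ⟨s, hst, rfl⟩

theorem stateInputSpan_mono (hst : s ≤ t) :
    stateInputSpan A B μ0 ν s ≤ stateInputSpan A B μ0 ν t :=
  Submodule.span_mono (Set.image_mono (Set.Iio_subset_Iio hst))

theorem fromCols_mulVec_stateInput :
    fromCols A B *ᵥ stateInput A B μ0 ν t = traj A B μ0 ν (t + 1) :=
  fromCols_mulVec_sumElim ..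

theorem Controllable.stateInputSpan_eq_top (h : Controllable A B)
    (hstuck : ∀ u, Sum.elim (traj A B μ0 ν t) u ∈ stateInputSpan A B μ0 ν t) :
    stateInputSpan A B μ0 ν t = ⊤ := by
  set W := stateInputSpan A B μ0 ν t
  have hinput (u : Fin m → ℝ) : Sum.elim (0 : Fin n → ℝ) u ∈ W := by
    have := sub_mem (hstuck u) (hstuck 0)
    rwa [← Sum.elim_sub_sub, sub_self, sub_zero] at this
  have hstate {s : ℕ} (hst : s ≤ t) : Sum.elim (traj A B μ0 ν s) (0 : Fin m → ℝ) ∈ W := by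
    rcases hst.lt_or_eq with hst | rfl
    · have := sub_mem (stateInput_mem_stateInputSpan hst) (hinput (ν s))
      rwa [stateInput, ← Sum.elim_sub_sub, sub_self, sub_zero] at this
    · exact hstuck 0
  refine h.eq_top_of_step_mem hinput fun w hw => ?_
  induction hw using Submodule.span_induction with
  | mem w hw =>
    obtain ⟨s, hst, rfl⟩ := hw
    rw [fromCols_mulVec_stateInput]
    exact hstate hst
  | zero => simp
  | add w w' _ _ hw hw' =>
    rw [mulVec_add, ← add_zero (0 : Fin m → ℝ), Sum.elim_add_add]
    exact add_mem hw hw'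
  | smul c w _ hw =>
    have hsmul : Sum.elim (fromCols A B *ᵥ (c • w)) (0 : Fin m → ℝ) =
        c • Sum.elim (fromCols A B *ᵥ w) 0 := by
      ext (i | j) <;> simp [mulVec_smul, mul_add]
    exact hsmul ▸ W.smul_mem c hw

theorem Controllable.exists_update_stateInputSpan_lt (h : Controllable A B)
    (ht : stateInputSpan A B μ0 ν t ≠ ⊤) :
    ∃ u, stateInputSpan A B μ0 ν t <
      stateInputSpan A B μ0 (Function.update ν t u) (t + 1) := by
  obtain ⟨u, hu⟩ := not_forall.1 (mt h.stateInputSpan_eq_top ht)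
  have hagree : ∀ s < t, ν s = Function.update ν t u s := fun s hs =>
    (Function.update_of_ne hs.ne u ν).symm
  refine ⟨u, SetLike.lt_iff_le_and_exists.2 ⟨?_, _, ?_, hu⟩⟩
  · rw [stateInputSpan_congr hagree]
    exact stateInputSpan_mono t.le_succ
  · rw [traj_congr hagree]
    simpa [stateInput] using stateInput_mem_stateInputSpan (A := A) (B := B) (μ0 := μ0)
      (ν := Function.update ν t u) t.lt_succ_self

variable (μ0) in
theorem Controllable.exists_min_le_finrank_stateInputSpan (h : Controllable A B) (t : ℕ) :
    ∃ ν, min t (n + m) ≤ Module.finrank ℝ (stateInputSpan A B μ0 ν t) := by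
  induction t with
  | zero => exact ⟨0, by simp⟩
  | succ t ih =>
    obtain ⟨ν, hν⟩ := ih
    by_cases htop : stateInputSpan A B μ0 ν t = ⊤
    · refine ⟨ν, ?_⟩
      rw [top_le_iff.1 (htop.ge.trans (stateInputSpan_mono t.le_succ)), finrank_top]
      simp
    · obtain ⟨u, hu⟩ := h.exists_update_stateInputSpan_lt htop
      have := Submodule.finrank_lt_finrank_of_lt hu
      exact ⟨Function.update ν t u, by omega⟩

end Control

section Zmat

variable {n m ℓ : ℕ} {A : Matrix (Fin n) (Fin n) ℝ} {B : Matrix (Fin n) (Fin m) ℝ}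

theorem Zmat_col (μ0 : Fin n → ℝ) (ν : ℕ → Fin m → ℝ) (c : Fin ℓ) :
    (Zmat A B μ0 fun t : Fin ℓ => ν t).col c = stateInput A B μ0 ν c.rev := by
  have hext : ∀ s < (c.rev : ℕ), (if hs : s < ℓ then ν (⟨s, hs⟩ : Fin ℓ) else 0) = ν s :=
    fun s hs => dif_pos (hs.trans c.rev.isLt)
  rw [stateInput, ← traj_congr hext]
  rfl

theorem rank_Zmat (μ0 : Fin n → ℝ) (ν : ℕ → Fin m → ℝ) :
    (Zmat A B μ0 fun t : Fin ℓ => ν t).rank =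
      Module.finrank ℝ (stateInputSpan A B μ0 ν ℓ) := by
  have hcols : Set.range (Zmat A B μ0 fun t : Fin ℓ => ν t).col =
      stateInput A B μ0 ν '' Set.Iio ℓ := by
    rw [← Fin.range_val, ← Set.range_comp,
      ← Fin.rev_surjective.range_comp (stateInput A B μ0 ν ∘ Fin.val)]
    exact congrArg Set.range (funext (Zmat_col μ0 ν))
  rw [rank_eq_finrank_span_cols, hcols, stateInputSpan]

theorem Controllable.exists_rank_Zmat_eq (h : Controllable A B) (μ0 : Fin n → ℝ)
    (hℓ : n + m ≤ ℓ) : ∃ ν : Fin ℓ → Fin m → ℝ, (Zmat A B μ0 ν).rank = n + m := by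
  obtain ⟨ν, hν⟩ := h.exists_min_le_finrank_stateInputSpan μ0 ℓ
  rw [min_eq_right hℓ, ← rank_Zmat] at hν
  refine ⟨fun t => ν t, le_antisymm ?_ hν⟩
  simpa using (Zmat A B μ0 fun t : Fin ℓ => ν t).rank_le_card_height

variable {X : Type*} {S : Subalgebra ℝ (X → ℝ)}

theorem traj_apply_mem (μ0 : Fin n → ℝ) {ν : X → ℕ → Fin m → ℝ}
    (hν : ∀ t j, (fun x => ν x t j) ∈ S) (t : ℕ) (i : Fin n) :
    (fun x => traj A B μ0 (ν x) t i) ∈ S := by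
  induction t generalizing i with
  | zero => exact S.algebraMap_mem (μ0 i)
  | succ t ih =>
    exact S.add_mem
      (dotProduct_mem_of_forall_apply_mem (fun j => S.algebraMap_mem (A i j)) ih)
      (dotProduct_mem_of_forall_apply_mem (fun j => S.algebraMap_mem (B i j)) (hν t))

theorem Zmat_apply_mem (μ0 : Fin n → ℝ) {ν : X → Fin ℓ → Fin m → ℝ}
    (hν : ∀ t j, (fun x => ν x t j) ∈ S) (r : Fin n ⊕ Fin m) (c : Fin ℓ) :
    (fun x => Zmat A B μ0 (ν x) r c) ∈ S := by
  rcases r with i | j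
  · refine traj_apply_mem μ0 (fun t j => ?_) _ i
    by_cases ht : t < ℓ
    · simpa only [ht, dite_true] using hν ⟨t, ht⟩ j
    · simp only [ht, dite_false]
      exact S.zero_mem
  · exact hν c.rev j

variable (A B) in
theorem det_Zmat_mul_transpose_mem (μ0 : Fin n → ℝ) {ν : X → Fin ℓ → Fin m → ℝ}
    (hν : ∀ t j, (fun x => ν x t j) ∈ S) :
    (fun x => (Zmat A B μ0 (ν x) * (Zmat A B μ0 (ν x))ᵀ).det) ∈ S :=
  det_mem_of_forall_apply_mem fun r r' =>
    dotProduct_mem_of_forall_apply_mem (Zmat_apply_mem μ0 hν r) (Zmat_apply_mem μ0 hν r')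

end Zmat

theorem Zmat_full_rank_as_general {Ω : Type*} [MeasurableSpace Ω] {P : Measure Ω} {n m ℓ : ℕ}
    {A : Matrix (Fin n) (Fin n) ℝ} {B : Matrix (Fin n) (Fin m) ℝ} (μ0 : Fin n → ℝ)
    (hctrb : Controllable A B) (hℓ : n + m ≤ ℓ) {ν : Ω → Fin ℓ → Fin m → ℝ}
    (hmeas : ∀ p : Fin ℓ × Fin m, AEMeasurable (fun ω => ν ω p.1 p.2) P)
    (hindep : iIndepFun (fun (p : Fin ℓ × Fin m) ω => ν ω p.1 p.2) P)
    (hlaw : ∀ p : Fin ℓ × Fin m, NullSingletonClass (P.map fun ω => ν ω p.1 p.2)) :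
    ∀ᵐ ω ∂P, (Zmat A B μ0 (ν ω)).rank = n + m ∧
      IsUnit (Zmat A B μ0 (ν ω) * (Zmat A B μ0 (ν ω))ᵀ) := by
  have hrank (M : Matrix (Fin n ⊕ Fin m) (Fin ℓ) ℝ) : M.rank = n + m ↔ IsUnit (M * Mᵀ) := by
    simp [isUnit_mul_transpose_iff_rank_eq_card]
  have hdet (M : Matrix (Fin n ⊕ Fin m) (Fin ℓ) ℝ) : IsUnit (M * Mᵀ) ↔ (M * Mᵀ).det ≠ 0 := by
    rw [isUnit_iff_isUnit_det, isUnit_iff_ne_zero]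
  obtain ⟨p, hp⟩ := mem_mvPolynomialFunctions.1 <| det_Zmat_mul_transpose_mem A B μ0
    (ν := fun (x : Fin ℓ × Fin m → ℝ) t j => x (t, j))
    fun t j => apply_mem_mvPolynomialFunctions (t, j)
  have hp_ne : p ≠ 0 := by
    rintro rfl
    obtain ⟨ν', hν'⟩ := hctrb.exists_rank_Zmat_eq μ0 hℓ
    exact (hdet _).1 ((hrank _).1 hν') (by simpa using (hp fun q => ν' q.1 q.2).symm)
  filter_upwards [ae_mvPolynomial_eval_ne_zero_of_iIndepFun hmeas hindep hlaw hp_ne] with ω hω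
  rw [hp, ← hdet] at hω
  exact ⟨(hrank _).2 hω, hω⟩

/-- If `(A, B)` is controllable, `ℓ ≥ (1/2)mn² + (1/2)mn + m + 2` (stated as
`2ℓ ≥ mn² + mn + 2m + 4`), and the entries of the random inputs `ν_0, …, ν_{ℓ-1} ∈ ℝ^m`
are mutually independent Gaussian random variables with strictly positive variances, then
with probability one `Z` has full row rank `n + m`, and consequently `Z Zᵀ` is invertible
with probability one. -/
theorem Zmat_full_rank_as {Ω : Type*} [MeasureSpace Ω]
    [IsProbabilityMeasure (volume : Measure Ω)] {n m ℓ : ℕ}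
    (A : Matrix (Fin n) (Fin n) ℝ) (B : Matrix (Fin n) (Fin m) ℝ) (μ0 : Fin n → ℝ)
    (hctrb : Controllable A B)
    (hℓ : 2 * ℓ ≥ m * n ^ 2 + m * n + 2 * m + 4)
    (ν : Ω → Fin ℓ → Fin m → ℝ)
    (a : Fin ℓ × Fin m → ℝ) (v : Fin ℓ × Fin m → NNReal) (hv : ∀ p, v p ≠ 0)
    (hindep : iIndepFun (m := fun _ : Fin ℓ × Fin m => (inferInstance : MeasurableSpace ℝ))
      (fun p ω => ν ω p.1 p.2) volume)
    (hgauss : ∀ p, Measure.map (fun ω => ν ω p.1 p.2) volume = gaussianReal (a p) (v p)) :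
    ∀ᵐ ω, (Zmat A B μ0 (ν ω)).rank = n + m ∧
      IsUnit (Zmat A B μ0 (ν ω) * (Zmat A B μ0 (ν ω))ᵀ) := by
  have hℓ' : n + m ≤ ℓ := by
    nlinarith [hctrb.le_mul, Nat.mul_le_mul_left m (Nat.le_self_pow two_ne_zero n)]
  have hmeas (p : Fin ℓ × Fin m) : AEMeasurable (fun ω => ν ω p.1 p.2) volume :=
    aemeasurable_of_map_neZero (by rw [hgauss]; infer_instance)
  exact Zmat_full_rank_as_general μ0 hctrb hℓ' hmeas hindep fun p =>
    hgauss p ▸ nullSingletonClass_gaussianReal (hv p)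
end

section
/- Consistency of the second-stage least-squares estimator: Let A ∈ ℝ^{n×n}, B ∈ ℝ^{n×m}, à = P_1(A ⊗ A)Q_1, B̃ = P_1(B ⊗ B)Q_2, K_{BA} = P_1(B ⊗ A), K_{AB} = P_1(A ⊗ B), and let Σ̃_A' ∈ ℝ^{N×N}, Σ̃_B' ∈ ℝ^{N×M} with N = n(n+1)/2, M = m(m+1)/2. Fix inputs ν_0, …, ν_{ℓ-1} ∈ ℝ^m and Ū_0, …, Ū_{ℓ-1} ∈ ℝ^{m×m} symmetric, and set U_t = P_2 vec(Ū_t + ν_t ν_t^T). Let (x_0^{(k)}, …, x_ℓ^{(k)}), k = 1, 2, 3, …, be an i.i.d. sequence of ℝ^{n(ℓ+1)}-valued random vectors with E‖x_t^{(1)}‖² < ∞ for all 0 ≤ t ≤ ℓ, such that the moments μ_t := E[x_t^{(1)}], X_t := P_1 vec(E[x_t^{(1)} (x_t^{(1)})^T]), W_t := vec(μ_t ν_t^T), W_t' := vec(ν_t μ_t^T) satisfy μ_{t+1} = A μ_t + B ν_t and X_{t+1} = (à + Σ̃_A') X_t + (B̃ + Σ̃_B') U_t + K_{BA} W_t + K_{AB}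 W_t' for 0 ≤ t ≤ ℓ-1. Suppose Z Z^T and D D^T are invertible, where Z = [[μ_{ℓ-1}, …, μ_0]; [ν_{ℓ-1}, …, ν_0]] and D = [[X_{ℓ-1}, …, X_0]; [U_{ℓ-1}, …, U_0]]. For each n_r define μ̂_t = (1/n_r) Σ_{k=1}^{n_r} x_t^{(k)}, X̂_t = P_1 vec((1/n_r) Σ_{k=1}^{n_r} x_t^{(k)} (x_t^{(k)})^T), Ŵ_t = vec(μ̂_t ν_t^T), Ŵ_t' = vec(ν_t μ̂_t^T); let [Â, B̂] = Ŷ Ẑ^T (Ẑ Ẑ^T)^{-1} (zero matrix if Ẑ Ẑ^T is singular) with Ŷ, Ẑ built from μ̂_t and ν_t as in the first stage; set Ã̂ = P_1(Â ⊗ Â)Q_1, B̂̃ = P_1(B̂ ⊗ B̂)Q_2, K̂_{BA} = P_1(B̂ ⊗ Â), K̂_{AB} = P_1(Â ⊗ B̂), Ĉ_t = X̂_t − [Ã̂ X̂_{t-1} + K̂_{BA} Ŵ_{t-1} + K̂_{AB} Ŵ_{t-1}' + B̂̃ U_{t-1}], Ĉ = [Ĉ_ℓ, …, Ĉ_1],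 D̂ = [[X̂_{ℓ-1}, …, X̂_0]; [U_{ℓ-1}, …, U_0]]. Then with probability one, as n_r → ∞, D̂ D̂^T is eventually invertible and Ĉ D̂^T (D̂ D̂^T)^{-1} converges to [Σ̃_A', Σ̃_B']. -/
open Matrix MeasureTheory ProbabilityTheory Filter Topology
open scoped Kronecker

/-- Column-wise vectorization of a `p × q` matrix: the pair `(j, i)` plays the role of the
linear index `(j-1)p + i`, so `vecM M (j, i) = M i j`. -/
def vecM {p q : ℕ} (M : Matrix (Fin p) (Fin q) ℝ) : Fin q × Fin p → ℝ :=
  fun ji => M ji.2 ji.1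

/-- Sorting of a pair index: the index `(j-1)n + i` with `i < j` (the pair `(j, i)`) is sent
to `(i-1)n + j` (the pair `(i, j)`); other indices are unchanged. -/
def sortPair {n : ℕ} (p : Fin n × Fin n) : Fin n × Fin n :=
  if p.2 < p.1 then p.swap else p

/-- The retained indices `(i-1)n + j`, `i ≤ j`: pairs `(i, j)` with `i ≤ j`. -/
abbrev SymIdx (n : ℕ) := {p : Fin n × Fin n // p.1 ≤ p.2}

/-- `P ∈ ℝ^{[n(n+1)/2] × n²}` (this is `P₁` for size `n` and `P₂` for size `m`): the identity
`I_{n²}` with the rows of index `(j-1)n + i`, `i < j`, removed. -/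
def Pmat (n : ℕ) : Matrix (SymIdx n) (Fin n × Fin n) ℝ :=
  Matrix.of fun s q => if s.val = q then (1 : ℝ) else 0

/-- `Q ∈ ℝ^{n² × [n(n+1)/2]}` (this is `Q₁` for size `n` and `Q₂` for size `m`): the matrix
`T` (the identity `I_{n²}` whose `((j-1)n+i)`-th row, `i < j`, is replaced by
`e_{(i-1)n+j}ᵀ`) with the columns of index `(j-1)n + i`, `i < j`, removed. -/
def Qmat (n : ℕ) : Matrix (Fin n × Fin n) (SymIdx n) ℝ :=
  Matrix.of fun q s => if sortPair q = s.val then (1 : ℝ) else 0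

/-!
Both stages are linear regressions `Y ≈ S * Z`, and the least-squares map
`(Y, Z) ↦ Y Zᵀ (Z Zᵀ)⁻¹` is continuous wherever `Z Zᵀ` is invertible and recovers `S` from exact
data `Y = S * Z`. By the strong law of large numbers the sample moments converge almost surely to
the exact ones, which satisfy `μ_{t+1} = [A, B] [μ_t; ν_t]`; hence the first-stage estimates
converge to `A` and `B`. The second-stage residuals depend continuously on the first-stage estimates
and the sample moments, and their limits are `[Σ̃_A', Σ̃_B'] [X_t; U_t]` by the second-moment
dynamics, so the second regression recovers `[Σ̃_A', Σ̃_B']`.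
-/

section LeastSquares

variable {p q r : Type*} [Fintype q] [DecidableEq q] [Fintype r]

/-- The least-squares estimate `Y Zᵀ (Z Zᵀ)⁻¹` of `S` in the regression `Y ≈ S * Z`, whose samples
are the columns of `Y` and `Z`. It is zero if `Z Zᵀ` is singular. -/
noncomputable def leastSquares {R : Type*} [CommRing R] (Y : Matrix p r R) (Z : Matrix q r R) :
    Matrix p q R :=
  Y * Zᵀ * (Z * Zᵀ)⁻¹

theorem leastSquares_mul_self {R : Type*} [CommRing R] (S : Matrix p q R) {Z : Matrix q r R}
    (hZ : IsUnit (Z * Zᵀ)) : leastSquares (S * Z) Z = S := by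
  rw [leastSquares, Matrix.mul_assoc S,
    mul_nonsing_inv_cancel_right _ _ ((isUnit_iff_isUnit_det _).1 hZ)]

variable {K : Type*} [Field K] [TopologicalSpace K]

theorem isOpen_setOf_isUnit_mul_transpose [IsTopologicalRing K] [T1Space K] :
    IsOpen {Z : Matrix q r K | IsUnit (Z * Zᵀ)} := by
  have hdet : Continuous fun Z : Matrix q r K => (Z * Zᵀ).det := by fun_prop
  simp only [isUnit_iff_isUnit_det, isUnit_iff_ne_zero]
  exact isOpen_ne.preimage hdet

theorem continuousAt_leastSquares [IsTopologicalDivisionRing K] (Y : Matrix p r K)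
    {Z : Matrix q r K} (hZ : IsUnit (Z * Zᵀ)) :
    ContinuousAt (fun YZ : Matrix p r K × Matrix q r K => leastSquares YZ.1 YZ.2) (Y, Z) := by
  have hdet : (Z * Zᵀ).det ≠ 0 := ((isUnit_iff_isUnit_det _).1 hZ).ne_zero
  have hinv : ContinuousAt Inv.inv (Z * Zᵀ) :=
    continuousAt_matrix_inv _ (by simpa only [Ring.inverse_eq_inv'] using continuousAt_inv₀ hdet)
  have hgram : Continuous fun YZ : Matrix p r K × Matrix q r K => YZ.2 * YZ.2ᵀ := by fun_prop
  have hcross : Continuous fun YZ : Matrix p r K × Matrix q r K => YZ.1 * YZ.2ᵀ := by fun_prop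
  have hmul : Continuous fun MN : Matrix p q K × Matrix q q K => MN.1 * MN.2 := by fun_prop
  exact (hmul.tendsto _).comp
    ((hcross.tendsto (Y, Z)).prodMk_nhds (hinv.tendsto.comp (hgram.tendsto (Y, Z))))

end LeastSquares

section ReverseCols

variable {p q R : Type*}

/-- The matrix `[v_{ℓ-1}, …, v_0]` whose columns are the first `ℓ` terms of a sequence of vectors,
latest first, as in the data matrices of both regressions. -/
def reverseCols (ℓ : ℕ) (v : ℕ → p → R) : Matrix p (Fin ℓ) R :=
  of fun i c => v c.rev i

theorem mul_reverseCols [NonUnitalNonAssocSemiring R] [Fintype q] (S : Matrix p q R) (ℓ : ℕ)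
    (v : ℕ → q → R) : S * reverseCols ℓ v = reverseCols ℓ fun t => S *ᵥ v t :=
  rfl

theorem tendsto_reverseCols [TopologicalSpace R] {α : Type*} {l : Filter α} {ℓ : ℕ}
    {v : α → ℕ → p → R} {v₀ : ℕ → p → R} (hv : ∀ t < ℓ, Tendsto (fun a => v a t) l (𝓝 (v₀ t))) :
    Tendsto (fun a => reverseCols ℓ (v a)) l (𝓝 (reverseCols ℓ v₀)) :=
  tendsto_pi_nhds.2 fun i => tendsto_pi_nhds.2 fun c => (hv c.rev c.rev.isLt).apply_nhds i

end ReverseCols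

section SumBlocks

variable {α p q q' R : Type*} {l : Filter α} [TopologicalSpace R]

theorem tendsto_sumElim {f : α → q → R} {g : α → q' → R} {f₀ : q → R} {g₀ : q' → R}
    (hf : Tendsto f l (𝓝 f₀)) (hg : Tendsto g l (𝓝 g₀)) :
    Tendsto (fun a => Sum.elim (f a) (g a)) l (𝓝 (Sum.elim f₀ g₀)) :=
  tendsto_pi_nhds.2 (Sum.rec hf.apply_nhds hg.apply_nhds)

theorem tendsto_of_tendsto_fromCols {F : α → Matrix p q R} {G : α → Matrix p q' R}
    {F₀ : Matrix p q R} {G₀ : Matrix p q' R}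
    (h : Tendsto (fun a => fromCols (F a) (G a)) l (𝓝 (fromCols F₀ G₀))) :
    Tendsto F l (𝓝 F₀) ∧ Tendsto G l (𝓝 G₀) := by
  have hleft : Continuous (toCols₁ : Matrix p (q ⊕ q') R → Matrix p q R) :=
    continuous_id.matrix_submatrix id Sum.inl
  have hright : Continuous (toCols₂ : Matrix p (q ⊕ q') R → Matrix p q' R) :=
    continuous_id.matrix_submatrix id Sum.inr
  exact ⟨(hleft.tendsto _).comp h, (hright.tendsto _).comp h⟩

end SumBlocks

section Regression

variable {α p q q' K : Type*} {l : Filter α} {ℓ : ℕ} [Fintype q] [Fintype q']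
  [DecidableEq q] [DecidableEq q'] [Field K] [TopologicalSpace K]

theorem eventually_isUnit_reverseCols_mul_transpose [IsTopologicalRing K] [T1Space K]
    {z₀ : ℕ → q → K} {z : α → ℕ → q → K}
    (hgram : IsUnit (reverseCols ℓ z₀ * (reverseCols ℓ z₀)ᵀ))
    (hz : ∀ t < ℓ, Tendsto (fun a => z a t) l (𝓝 (z₀ t))) :
    ∀ᶠ a in l, IsUnit (reverseCols ℓ (z a) * (reverseCols ℓ (z a))ᵀ) :=
  tendsto_reverseCols hz |>.eventually_mem (isOpen_setOf_isUnit_mul_transpose.mem_nhds hgram)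

variable [IsTopologicalDivisionRing K]

theorem tendsto_leastSquares_reverseCols {S : Matrix p q K} {z₀ : ℕ → q → K}
    {z : α → ℕ → q → K} {y : α → ℕ → p → K}
    (hgram : IsUnit (reverseCols ℓ z₀ * (reverseCols ℓ z₀)ᵀ))
    (hz : ∀ t < ℓ, Tendsto (fun a => z a t) l (𝓝 (z₀ t)))
    (hy : ∀ t < ℓ, Tendsto (fun a => y a t) l (𝓝 (S *ᵥ z₀ t))) :
    Tendsto (fun a => leastSquares (reverseCols ℓ (y a)) (reverseCols ℓ (z a))) l (𝓝 S) := by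
  have h := (continuousAt_leastSquares (reverseCols ℓ fun t => S *ᵥ z₀ t) hgram).tendsto.comp
    ((tendsto_reverseCols hy).prodMk_nhds (tendsto_reverseCols hz))
  rwa [← mul_reverseCols, leastSquares_mul_self S hgram] at h

theorem tendsto_firstStage {A : Matrix q q K} {B : Matrix q q' K} {μ : ℕ → q → K}
    {ν : ℕ → q' → K} {μhat : α → ℕ → q → K} {Ahat : α → Matrix q q K} {Bhat : α → Matrix q q' K}
    (hdyn : ∀ t < ℓ, μ (t + 1) = A *ᵥ μ t + B *ᵥ ν t)
    (hgram : IsUnit ((reverseCols ℓ fun t => Sum.elim (μ t) (ν t)) *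
      (reverseCols ℓ fun t => Sum.elim (μ t) (ν t))ᵀ))
    (hμhat : ∀ t ≤ ℓ, Tendsto (fun a => μhat a t) l (𝓝 (μ t)))
    (hABhat : ∀ a, fromCols (Ahat a) (Bhat a) =
      leastSquares (reverseCols ℓ fun t => μhat a (t + 1))
        (reverseCols ℓ fun t => Sum.elim (μhat a t) (ν t))) :
    Tendsto Ahat l (𝓝 A) ∧ Tendsto Bhat l (𝓝 B) := by
  apply tendsto_of_tendsto_fromCols
  simp only [hABhat]
  refine tendsto_leastSquares_reverseCols hgram
    (fun t ht => tendsto_sumElim (hμhat t ht.le) tendsto_const_nhds) fun t ht => ?_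
  rw [fromCols_mulVec_sumElim, ← hdyn t ht]
  exact hμhat (t + 1) ht

end Regression

section SecondStage

variable {n m ℓ : ℕ}

/-- The vectorized second moment after one step of the dynamics without multiplicative noise,
`Ã X + K_{BA} W + K_{AB} W' + B̃ U`. The second-stage residuals are the deviations from it. -/
def noiselessSecondMoment (A : Matrix (Fin n) (Fin n) ℝ) (B : Matrix (Fin n) (Fin m) ℝ)
    (μ : Fin n → ℝ) (ν : Fin m → ℝ) (X : SymIdx n → ℝ) (U : SymIdx m → ℝ) : SymIdx n → ℝ :=
  (Pmat n * (A ⊗ₖ A) * Qmat n) *ᵥ X +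
    (Pmat n * (B ⊗ₖ A)) *ᵥ (fun p : Fin m × Fin n => μ p.2 * ν p.1) +
    (Pmat n * (A ⊗ₖ B)) *ᵥ (fun p : Fin n × Fin m => ν p.2 * μ p.1) +
    (Pmat n * (B ⊗ₖ B) * Qmat m) *ᵥ U

theorem noiselessSecondMoment_add_noise (A : Matrix (Fin n) (Fin n) ℝ)
    (B : Matrix (Fin n) (Fin m) ℝ) (SigAt : Matrix (SymIdx n) (SymIdx n) ℝ)
    (SigBt : Matrix (SymIdx n) (SymIdx m) ℝ) (μ : Fin n → ℝ) (ν : Fin m → ℝ) (X : SymIdx n → ℝ)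
    (U : SymIdx m → ℝ) :
    noiselessSecondMoment A B μ ν X U + (SigAt *ᵥ X + SigBt *ᵥ U) =
      (Pmat n * (A ⊗ₖ A) * Qmat n + SigAt) *ᵥ X + (Pmat n * (B ⊗ₖ B) * Qmat m + SigBt) *ᵥ U +
        (Pmat n * (B ⊗ₖ A)) *ᵥ (fun p : Fin m × Fin n => μ p.2 * ν p.1) +
        (Pmat n * (A ⊗ₖ B)) *ᵥ (fun p : Fin n × Fin m => ν p.2 * μ p.1) := by
  rw [noiselessSecondMoment, add_mulVec, add_mulVec]
  abel

@[fun_prop]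
theorem continuous_kronecker {X R p q r s : Type*} [TopologicalSpace X] [TopologicalSpace R]
    [Mul R] [ContinuousMul R] {F : X → Matrix p q R} {G : X → Matrix r s R} (hF : Continuous F)
    (hG : Continuous G) : Continuous fun x => F x ⊗ₖ G x :=
  continuous_matrix fun i j => (hF.matrix_elem i.1 j.1).mul (hG.matrix_elem i.2 j.2)

theorem continuous_noiselessSecondMoment (ν : Fin m → ℝ) (U : SymIdx m → ℝ) :
    Continuous fun z : (Matrix (Fin n) (Fin n) ℝ × Matrix (Fin n) (Fin m) ℝ) ×
      (Fin n → ℝ) × (SymIdx n → ℝ) => noiselessSecondMoment z.1.1 z.1.2 z.2.1 ν z.2.2 U := by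
  unfold noiselessSecondMoment
  fun_prop

theorem tendsto_secondStage {α : Type*} {l : Filter α} {A : Matrix (Fin n) (Fin n) ℝ}
    {B : Matrix (Fin n) (Fin m) ℝ} {SigAt : Matrix (SymIdx n) (SymIdx n) ℝ}
    {SigBt : Matrix (SymIdx n) (SymIdx m) ℝ} {μ : ℕ → Fin n → ℝ} {ν : ℕ → Fin m → ℝ}
    {X : ℕ → SymIdx n → ℝ} {U : ℕ → SymIdx m → ℝ} {μhat : α → ℕ → Fin n → ℝ}
    {Xhat : α → ℕ → SymIdx n → ℝ} {Ahat : α → Matrix (Fin n) (Fin n) ℝ}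
    {Bhat : α → Matrix (Fin n) (Fin m) ℝ}
    (hdyn : ∀ t < ℓ, X (t + 1) =
      noiselessSecondMoment A B (μ t) (ν t) (X t) (U t) + (SigAt *ᵥ X t + SigBt *ᵥ U t))
    (hgram : IsUnit ((reverseCols ℓ fun t => Sum.elim (X t) (U t)) *
      (reverseCols ℓ fun t => Sum.elim (X t) (U t))ᵀ))
    (hA : Tendsto Ahat l (𝓝 A)) (hB : Tendsto Bhat l (𝓝 B))
    (hμhat : ∀ t < ℓ, Tendsto (fun a => μhat a t) l (𝓝 (μ t)))
    (hXhat : ∀ t ≤ ℓ, Tendsto (fun a => Xhat a t) l (𝓝 (X t))) :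
    Tendsto (fun a => leastSquares
      (reverseCols ℓ fun t => Xhat a (t + 1) -
        noiselessSecondMoment (Ahat a) (Bhat a) (μhat a t) (ν t) (Xhat a t) (U t))
      (reverseCols ℓ fun t => Sum.elim (Xhat a t) (U t))) l (𝓝 (fromCols SigAt SigBt)) := by
  refine tendsto_leastSquares_reverseCols hgram
    (fun t ht => tendsto_sumElim (hXhat t ht.le) tendsto_const_nhds) fun t ht => ?_
  have hprediction :=
    ((continuous_noiselessSecondMoment (ν t) (U t)).tendsto ((A, B), μ t, X t)).comp
      ((hA.prodMk_nhds hB).prodMk_nhds ((hμhat t ht).prodMk_nhds (hXhat t ht.le)))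
  have hresidual := (hXhat (t + 1) ht).sub hprediction
  rwa [hdyn t ht, add_sub_cancel_left, ← fromCols_mulVec_sumElim] at hresidual

end SecondStage

section SampleMoments

variable {Ω ι : Type*} [Countable ι] {mΩ : MeasurableSpace Ω} {P : Measure Ω}
  {y : ℕ → Ω → ι → ℝ}

theorem ae_tendsto_sampleMean (hindep : Pairwise fun j k => IndepFun (y j) (y k) P)
    (hident : ∀ k, IdentDistrib (y k) (y 0) P P) (hint : ∀ i, Integrable (fun ω => y 0 ω i) P) :
    ∀ᵐ ω ∂P, Tendsto (fun N : ℕ => (N : ℝ)⁻¹ • ∑ k ∈ Finset.range N, y k ω) atTop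
      (𝓝 fun i => ∫ ω, y 0 ω i ∂P) := by
  have hcoord (i : ι) : Measurable fun v : ι → ℝ => v i := measurable_pi_apply i
  have hlaw (i : ι) := strong_law_ae (fun k ω => y k ω i) (hint i)
    (fun _ _ hjk => (hindep hjk).comp (hcoord i) (hcoord i)) (fun k => (hident k).comp (hcoord i))
  filter_upwards [ae_all_iff.2 hlaw] with ω hω
  refine tendsto_pi_nhds.2 fun i => ?_
  simpa only [Pi.smul_apply, Finset.sum_apply] using hω i

theorem ae_tendsto_sampleSecondMoment (hindep : Pairwise fun j k => IndepFun (y j) (y k) P)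
    (hident : ∀ k, IdentDistrib (y k) (y 0) P P) (hL2 : ∀ i, MemLp (fun ω => y 0 ω i) 2 P) :
    ∀ᵐ ω ∂P, Tendsto
      (fun (N : ℕ) (p : ι × ι) => (N : ℝ)⁻¹ * ∑ k ∈ Finset.range N, y k ω p.2 * y k ω p.1) atTop
      (𝓝 fun p => ∫ ω, y 0 ω p.2 * y 0 ω p.1 ∂P) := by
  let products : (ι → ℝ) → ι × ι → ℝ := fun v p => v p.2 * v p.1
  have hproducts : Measurable products := by fun_prop
  filter_upwards [ae_tendsto_sampleMean (y := fun k ω => products (y k ω))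
    (fun j k hjk => (hindep hjk).comp hproducts hproducts) (fun k => (hident k).comp hproducts)
    fun p => (hL2 p.2).integrable_mul (hL2 p.1)] with ω hω
  refine hω.congr fun N => ?_
  ext p
  simp only [products, Pi.smul_apply, Finset.sum_apply, smul_eq_mul]

end SampleMoments

theorem second_stage_least_squares_consistent_general {Ω : Type*} {mΩ : MeasurableSpace Ω}
    {P : Measure Ω} [IsProbabilityMeasure P] {n m ℓ : ℕ}
    {A : Matrix (Fin n) (Fin n) ℝ} {B : Matrix (Fin n) (Fin m) ℝ}
    {SigAt : Matrix (SymIdx n) (SymIdx n) ℝ} {SigBt : Matrix (SymIdx n) (SymIdx m) ℝ}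
    {ν : ℕ → Fin m → ℝ} {U : ℕ → SymIdx m → ℝ} {x : ℕ → Ω → ℕ → Fin n → ℝ}
    (hindep : ∀ t ≤ ℓ, Pairwise fun j k => IndepFun (fun ω => x j ω t) (fun ω => x k ω t) P)
    (hident : ∀ t ≤ ℓ, ∀ k, IdentDistrib (fun ω => x k ω t) (fun ω => x 0 ω t) P P)
    (hL2 : ∀ t ≤ ℓ, ∀ i, MemLp (fun ω => x 0 ω t i) 2 P)
    {μ : ℕ → Fin n → ℝ} (hμ : ∀ t ≤ ℓ, ∀ i, μ t i = ∫ ω, x 0 ω t i ∂P)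
    {X : ℕ → SymIdx n → ℝ}
    (hX : ∀ t ≤ ℓ, X t =
      Pmat n *ᵥ fun p : Fin n × Fin n => ∫ ω, x 0 ω t p.2 * x 0 ω t p.1 ∂P)
    (hμdyn : ∀ t < ℓ, μ (t + 1) = A *ᵥ μ t + B *ᵥ ν t)
    (hXdyn : ∀ t < ℓ, X (t + 1) =
      noiselessSecondMoment A B (μ t) (ν t) (X t) (U t) + (SigAt *ᵥ X t + SigBt *ᵥ U t))
    (hZ : IsUnit ((reverseCols ℓ fun t => Sum.elim (μ t) (ν t)) *
      (reverseCols ℓ fun t => Sum.elim (μ t) (ν t))ᵀ))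
    (hD : IsUnit ((reverseCols ℓ fun t => Sum.elim (X t) (U t)) *
      (reverseCols ℓ fun t => Sum.elim (X t) (U t))ᵀ))
    {μhat : ℕ → Ω → ℕ → Fin n → ℝ}
    (hμhat : ∀ N ω t, μhat N ω t = (N : ℝ)⁻¹ • ∑ k ∈ Finset.range N, x k ω t)
    {Xhat : ℕ → Ω → ℕ → SymIdx n → ℝ}
    (hXhat : ∀ N ω t, Xhat N ω t = Pmat n *ᵥ fun p : Fin n × Fin n =>
      (N : ℝ)⁻¹ * ∑ k ∈ Finset.range N, x k ω t p.2 * x k ω t p.1)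
    {Ahat : ℕ → Ω → Matrix (Fin n) (Fin n) ℝ} {Bhat : ℕ → Ω → Matrix (Fin n) (Fin m) ℝ}
    (hABhat : ∀ N ω, fromCols (Ahat N ω) (Bhat N ω) =
      leastSquares (reverseCols ℓ fun t => μhat N ω (t + 1))
        (reverseCols ℓ fun t => Sum.elim (μhat N ω t) (ν t))) :
    ∀ᵐ ω ∂P,
      (∀ᶠ N in atTop, IsUnit ((reverseCols ℓ fun t => Sum.elim (Xhat N ω t) (U t)) *
        (reverseCols ℓ fun t => Sum.elim (Xhat N ω t) (U t))ᵀ)) ∧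
      Tendsto (fun N => leastSquares
        (reverseCols ℓ fun t => Xhat N ω (t + 1) -
          noiselessSecondMoment (Ahat N ω) (Bhat N ω) (μhat N ω t) (ν t) (Xhat N ω t) (U t))
        (reverseCols ℓ fun t => Sum.elim (Xhat N ω t) (U t)))
        atTop (𝓝 (fromCols SigAt SigBt)) := by
  have hmean : ∀ᵐ ω ∂P, ∀ t ≤ ℓ, Tendsto (fun N => μhat N ω t) atTop (𝓝 (μ t)) := by
    simp only [ae_all_iff, hμhat]
    intro t ht
    rw [funext (hμ t ht)]
    exact ae_tendsto_sampleMean (hindep t ht) (hident t ht)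
      fun i => (hL2 t ht i).integrable one_le_two
  have hsecond : ∀ᵐ ω ∂P, ∀ t ≤ ℓ, Tendsto (fun N => Xhat N ω t) atTop (𝓝 (X t)) := by
    simp only [ae_all_iff, hXhat]
    intro t ht
    have hP : Continuous fun v : Fin n × Fin n → ℝ => Pmat n *ᵥ v := by fun_prop
    filter_upwards [ae_tendsto_sampleSecondMoment (hindep t ht) (hident t ht) (hL2 t ht)] with ω hω
    rw [hX t ht]
    exact (hP.tendsto _).comp hω
  filter_upwards [hmean, hsecond] with ω hmeanω hsecondω
  obtain ⟨hA, hB⟩ := tendsto_firstStage hμdyn hZ hmeanω fun N => hABhat N ω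
  exact ⟨eventually_isUnit_reverseCols_mul_transpose hD fun t ht =>
      tendsto_sumElim (hsecondω t ht.le) tendsto_const_nhds,
    tendsto_secondStage hXdyn hD hA hB (fun t ht => hmeanω t ht.le) hsecondω⟩

/-- Consistency of the second-stage least-squares estimator for the simplified noise
covariance matrices `Σ̃_A', Σ̃_B'` of a linear system with multiplicative noise. -/
theorem second_stage_least_squares_consistent {Ω : Type*} [MeasureSpace Ω]
    [IsProbabilityMeasure (volume : Measure Ω)] {n m ℓ : ℕ}
    (A : Matrix (Fin n) (Fin n) ℝ) (B : Matrix (Fin n) (Fin m) ℝ)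
    (SigAt : Matrix (SymIdx n) (SymIdx n) ℝ) (SigBt : Matrix (SymIdx n) (SymIdx m) ℝ)
    -- fixed inputs: means ν_t and symmetric second-moment parts Ū_t,
    -- with U_t = P₂ vec(Ū_t + ν_t ν_tᵀ)
    (ν : ℕ → Fin m → ℝ) (Ubar : ℕ → Matrix (Fin m) (Fin m) ℝ)
    (hUbar : ∀ t, (Ubar t).IsSymm)
    (U : ℕ → SymIdx m → ℝ)
    (hU : ∀ t, U t = Pmat m *ᵥ vecM (Ubar t + vecMulVec (ν t) (ν t)))
    -- i.i.d. rollouts (x_0^{(k)}, …, x_ℓ^{(k)}) with finite second moments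
    (x : ℕ → Ω → ℕ → Fin n → ℝ)
    (hindep : iIndepFun (m := fun _ : ℕ => (inferInstance : MeasurableSpace (Fin (ℓ + 1) → Fin n → ℝ)))
      (fun k ω => fun t : Fin (ℓ + 1) => x k ω t) volume)
    (hident : ∀ k, IdentDistrib (fun ω => fun t : Fin (ℓ + 1) => x k ω t)
      (fun ω => fun t : Fin (ℓ + 1) => x 0 ω t) volume volume)
    (hL2 : ∀ t ≤ ℓ, ∀ i, MemLp (fun ω => x 0 ω t i) 2)
    -- the exact moments μ_t = E[x_t], X_t = P₁ vec(E[x_t x_tᵀ]) and their dynamics,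
    -- with W_t = vec(μ_t ν_tᵀ) and W_t' = vec(ν_t μ_tᵀ)
    (μ : ℕ → Fin n → ℝ) (hμ : ∀ t ≤ ℓ, ∀ i, μ t i = ∫ ω, x 0 ω t i)
    (Xm : ℕ → SymIdx n → ℝ)
    (hXm : ∀ t ≤ ℓ, Xm t =
      Pmat n *ᵥ fun p : Fin n × Fin n => ∫ ω, x 0 ω t p.2 * x 0 ω t p.1)
    (hdyn1 : ∀ t < ℓ, μ (t + 1) = A *ᵥ μ t + B *ᵥ ν t)
    (hdyn2 : ∀ t < ℓ, Xm (t + 1) =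
      (Pmat n * (A ⊗ₖ A) * Qmat n + SigAt) *ᵥ Xm t +
        (Pmat n * (B ⊗ₖ B) * Qmat m + SigBt) *ᵥ U t +
        (Pmat n * (B ⊗ₖ A)) *ᵥ (fun p : Fin m × Fin n => μ t p.2 * ν t p.1) +
        (Pmat n * (A ⊗ₖ B)) *ᵥ (fun p : Fin n × Fin m => ν t p.2 * μ t p.1))
    -- invertibility of the exact Gram matrices Z Zᵀ and D Dᵀ
    (Z : Matrix (Fin n ⊕ Fin m) (Fin ℓ) ℝ)
    (hZ : Z = Matrix.of fun r c =>
      Sum.elim (fun i => μ (c.rev : ℕ) i) (fun j => ν (c.rev : ℕ) j) r)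
    (hZZ : IsUnit (Z * Zᵀ))
    (D : Matrix (SymIdx n ⊕ SymIdx m) (Fin ℓ) ℝ)
    (hD : D = Matrix.of fun r c =>
      Sum.elim (fun s => Xm (c.rev : ℕ) s) (fun s => U (c.rev : ℕ) s) r)
    (hDD : IsUnit (D * Dᵀ))
    -- sample averages over the first n_r rollouts
    (μhat : ℕ → Ω → ℕ → Fin n → ℝ)
    (hμhat : ∀ nr ω t, μhat nr ω t = (nr : ℝ)⁻¹ • ∑ k ∈ Finset.range nr, x k ω t)
    (Xhat : ℕ → Ω → ℕ → SymIdx n → ℝ)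
    (hXhat : ∀ nr ω t, Xhat nr ω t = Pmat n *ᵥ fun p : Fin n × Fin n =>
      (nr : ℝ)⁻¹ * ∑ k ∈ Finset.range nr, x k ω t p.2 * x k ω t p.1)
    -- the first-stage estimator [Â, B̂] = Ŷ Ẑᵀ (Ẑ Ẑᵀ)⁻¹
    -- (`Matrix.inv` is the zero matrix when `Ẑ Ẑᵀ` is singular)
    (Yhat : ℕ → Ω → Matrix (Fin n) (Fin ℓ) ℝ)
    (hYhat : ∀ nr ω, Yhat nr ω = Matrix.of fun i c => μhat nr ω ((c.rev : ℕ) + 1) i)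
    (Zhat : ℕ → Ω → Matrix (Fin n ⊕ Fin m) (Fin ℓ) ℝ)
    (hZhat : ∀ nr ω, Zhat nr ω = Matrix.of fun r c =>
      Sum.elim (fun i => μhat nr ω (c.rev : ℕ) i) (fun j => ν (c.rev : ℕ) j) r)
    (Ahat : ℕ → Ω → Matrix (Fin n) (Fin n) ℝ) (Bhat : ℕ → Ω → Matrix (Fin n) (Fin m) ℝ)
    (hABhat : ∀ nr ω, fromCols (Ahat nr ω) (Bhat nr ω) =
      Yhat nr ω * (Zhat nr ω)ᵀ * (Zhat nr ω * (Zhat nr ω)ᵀ)⁻¹)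
    -- the second-stage residual and data matrices Ĉ and D̂, with
    -- Ŵ_t = vec(μ̂_t ν_tᵀ) and Ŵ_t' = vec(ν_t μ̂_tᵀ)
    (Chat : ℕ → Ω → Matrix (SymIdx n) (Fin ℓ) ℝ)
    (hChat : ∀ nr ω, Chat nr ω = Matrix.of fun i c =>
      (Xhat nr ω ((c.rev : ℕ) + 1) -
        ((Pmat n * (Ahat nr ω ⊗ₖ Ahat nr ω) * Qmat n) *ᵥ Xhat nr ω (c.rev : ℕ) +
          (Pmat n * (Bhat nr ω ⊗ₖ Ahat nr ω)) *ᵥ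
            (fun p : Fin m × Fin n => μhat nr ω (c.rev : ℕ) p.2 * ν (c.rev : ℕ) p.1) +
          (Pmat n * (Ahat nr ω ⊗ₖ Bhat nr ω)) *ᵥ
            (fun p : Fin n × Fin m => ν (c.rev : ℕ) p.2 * μhat nr ω (c.rev : ℕ) p.1) +
          (Pmat n * (Bhat nr ω ⊗ₖ Bhat nr ω) * Qmat m) *ᵥ U (c.rev : ℕ))) i)
    (Dhat : ℕ → Ω → Matrix (SymIdx n ⊕ SymIdx m) (Fin ℓ) ℝ)
    (hDhat : ∀ nr ω, Dhat nr ω = Matrix.of fun r c =>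
      Sum.elim (fun s => Xhat nr ω (c.rev : ℕ) s) (fun s => U (c.rev : ℕ) s) r) :
    -- conclusion: eventual invertibility of D̂ D̂ᵀ and convergence of the estimator
    ∀ᵐ ω, (∀ᶠ nr in atTop, IsUnit (Dhat nr ω * (Dhat nr ω)ᵀ)) ∧
      Tendsto (fun nr => Chat nr ω * (Dhat nr ω)ᵀ * (Dhat nr ω * (Dhat nr ω)ᵀ)⁻¹)
        atTop (nhds (fromCols SigAt SigBt)) := by
  subst hZ hD
  simp only [hYhat, hZhat] at hABhat
  simp only [hChat, hDhat]
  have hmeas {t : ℕ} (ht : t ≤ ℓ) : Measurable fun y : Fin (ℓ + 1) → Fin n → ℝ =>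
      y ⟨t, Nat.lt_succ_of_le ht⟩ := measurable_pi_apply _
  have hindep' : ∀ t ≤ ℓ, Pairwise fun j k => IndepFun (fun ω => x j ω t) (fun ω => x k ω t) :=
    fun t ht j k hjk => (hindep.indepFun hjk).comp (hmeas ht) (hmeas ht)
  have hident' : ∀ t ≤ ℓ, ∀ k, IdentDistrib (fun ω => x k ω t) (fun ω => x 0 ω t) :=
    fun t ht k => (hident k).comp (hmeas ht)
  exact second_stage_least_squares_consistent_general hindep' hident' hL2 hμ hXm hdyn1
    (fun t ht => (hdyn2 t ht).trans (noiselessSecondMoment_add_noise ..).symm)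
    hZZ hDD hμhat hXhat hABhat
end
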